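/- (Calibration of probabilistic conformal prediction, PCP) Let X be a measurable space and d ≥ 1. Let κ be a Markov kernel from X to ℝ^d (the trained probabilistic predictor). Let (x_1, y_1), …, (x_N, y_N), (x_{N+1}, y_{N+1}) be i.i.d. random pairs in X × ℝ^d, and, conditionally independently given the pairs, for each i = 1, …, N+1 draw M i.i.d. predictions ŷ_i^1, …, ŷ_i^M ∼ κ(x_i, ·). Define the score s_i = min_{1 ≤ m ≤ M} ‖y_i − ŷ_i^m‖ (Euclidean norm) for the calibration points i ≤ N, and for a candidate y' define s((x_{N+1}, y')) = min_{1 ≤ m ≤ M} ‖y' − ŷ_{N+1}^m‖. For α ∈ (0,1) with α ≥ 1/(N+1), let Q_{1−α} be the ⌈(1−α)(N+1)⌉-th smallest value among s_1, …, s_N, and define Γ_M(x_{N+1}) = { y' ∈ ℝ^d : min_{1 ≤ m ≤ M} ‖y' − ŷ_{N+1}^m‖ ≤ Q_{1−α} }. Then Pr( y_{N+1} ∈ Γ_M(x_{N+1}) ) ≥ 1 − α, where the probability is over the calibration data, the test point, and all random predictions. -/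

import Mathlib

open MeasureTheory ProbabilityTheory

/-- The `k`-th smallest value (counting multiplicities) of a list of reals:
the `k`-th entry of the list sorted in nondecreasing order. -/
noncomputable def kthSmallest (l : List ℝ) (k : ℕ) : ℝ :=
  (l.mergeSort (fun a b => @decide (a ≤ b) (Classical.propDecidable _))).getD (k - 1) 0

lemma pcp_le_kth (l : List ℝ) (k : ℕ) (hk1 : 1 ≤ k) (hk : k ≤ l.length) (a : ℝ)
    (h : l.countP (fun b => decide (b < a)) < k) : a ≤ kthSmallest l k := by
  unfold kthSmallest
  set L := l.mergeSort (fun a b => @decide (a ≤ b) (Classical.propDecidable _)) with hL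
  have hperm : L.Perm l := List.mergeSort_perm _ _
  have hs : L.Pairwise (· ≤ ·) := by
    have := List.pairwise_mergeSort
      (le := fun a b : ℝ => @decide (a ≤ b) (Classical.propDecidable _))
      (by intro a b c; simp only [decide_eq_true_eq]; exact le_trans)
      (by intro a b; simp only [Bool.or_eq_true, decide_eq_true_eq]; exact le_total a b) l
    simpa only [decide_eq_true_eq] using this
  have hlen : L.length = l.length := hperm.length_eq
  by_contra hcon
  push Not at hcon
  rw [List.getD_eq_getElem _ _ (by omega)] at hcon
  have h1 : (L.take k).countP (fun b => decide (b < a)) = (L.take k).length := by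
    rw [List.countP_eq_length]
    intro b hb
    obtain ⟨i, hi, rfl⟩ := List.getElem_of_mem hb
    simp only [List.length_take] at hi
    simp only [List.getElem_take, decide_eq_true_eq]
    refine lt_of_le_of_lt ?_ hcon
    rcases (show i ≤ k - 1 by omega).eq_or_lt with h' | h'
    · simp [h']
    · exact List.pairwise_iff_getElem.1 hs i (k-1) _ _ h'
  have h2 := (List.take_sublist k L).countP_le (p := fun b => decide (b < a))
  rw [h1, hperm.countP_eq, List.length_take] at h2
  omega

lemma pcp_countP_ofFn {n : ℕ} (f : Fin n → ℝ) (a : ℝ) :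
    (List.ofFn f).countP (fun b => decide (b < a)) =
      (Finset.univ.filter fun i => f i < a).card := by
  rw [List.ofFn_eq_map, List.countP_map, List.countP_eq_length_filter]
  rfl

lemma pcp_count {n : ℕ} (f : Fin n → ℝ) (k : ℕ) (hk : k ≤ n) :
    k ≤ (Finset.univ.filter fun j => (Finset.univ.filter fun i => f i < f j).card < k).card := by
  have hm := Tuple.monotone_sort f
  set σ := Tuple.sort f
  have : ((Finset.univ.filter fun j : Fin n => (j : ℕ) < k).map σ.toEmbedding) ⊆
      (Finset.univ.filter fun j => (Finset.univ.filter fun i => f i < f j).card < k) := by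
    intro j hj
    simp only [Finset.mem_map, Finset.mem_filter, Finset.mem_univ, true_and] at hj ⊢
    obtain ⟨i, hi, rfl⟩ := hj
    have hsub : (Finset.univ.filter fun i' => f i' < f (σ.toEmbedding i)) ⊆
        (Finset.Iio i).map σ.toEmbedding := by
      intro b hb
      simp only [Finset.mem_filter, Finset.mem_univ, true_and, Finset.mem_map, Finset.mem_Iio] at hb ⊢
      refine ⟨σ.symm b, ?_, by simp⟩
      by_contra hcon
      have := hm (not_lt.1 hcon)
      simp at this
      exact absurd hb (not_lt.2 (by simpa using this))
    have := Finset.card_le_card hsub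
    simp at this
    exact lt_of_le_of_lt (by simpa using this) hi
  have h2 := Finset.card_le_card this
  rw [Finset.card_map] at h2
  refine le_trans (le_of_eq ?_) h2
  rw [Fin.card_filter_val_lt]
  omega

lemma pcp_exch {Ω : Type*} [MeasurableSpace Ω] (ρ : Measure Ω) [IsProbabilityMeasure ρ]
    (T : Ω → ℝ) (hT : Measurable T) (n k : ℕ) (hk : k ≤ n + 1) :
    (k : ENNReal) ≤ (n + 1 : ℕ) * (Measure.pi fun _ : Fin (n + 1) => ρ)
      {w | (Finset.univ.filter fun i => T (w i) < T (w (Fin.last n))).card < k} := by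
  classical
  set μ := (Measure.pi fun _ : Fin (n + 1) => ρ) with hμ
  let A : Fin (n + 1) → Set (Fin (n + 1) → Ω) := fun j =>
    {w | (Finset.univ.filter fun i => T (w i) < T (w j)).card < k}
  have hA : ∀ j, MeasurableSet (A j) := by
    intro j
    have hc : Measurable fun w : Fin (n + 1) → Ω =>
        ∑ i, if T (w i) < T (w j) then (1 : ℕ) else 0 := by
      refine Finset.measurable_sum _ fun i _ => ?_
      refine Measurable.ite (measurableSet_lt ?_ ?_) measurable_const measurable_const
      · exact hT.comp (measurable_pi_apply i)
      · exact hT.comp (measurable_pi_apply j)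
    have : A j = {w | (∑ i, if T (w i) < T (w j) then (1 : ℕ) else 0) < k} := by
      ext w
      simp only [A, Finset.card_filter]
    rw [this]
    exact measurableSet_lt hc measurable_const
  have hEq : ∀ j, μ (A j) = μ (A (Fin.last n)) := by
    intro j
    let e : Equiv.Perm (Fin (n + 1)) := Equiv.swap j (Fin.last n)
    have hmp : MeasurePreserving (fun w : Fin (n + 1) → Ω => w ∘ e) μ μ := by
      have hme : Measurable (fun w : Fin (n + 1) → Ω => w ∘ e) :=
        measurable_pi_lambda _ fun i => measurable_pi_apply (e i)
      refine ⟨hme, ?_⟩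
      refine (Measure.pi_eq fun s hs => ?_).symm
      rw [Measure.map_apply hme (MeasurableSet.univ_pi hs)]
      have : (fun w : Fin (n + 1) → Ω => w ∘ e) ⁻¹' (Set.univ.pi s) =
          Set.univ.pi (fun i => s (e i)) := by
        ext w
        simp only [Set.mem_preimage, Set.mem_univ_pi, Function.comp]
        constructor
        · intro h i
          simpa [e] using h (e i)
        · intro h i
          simpa [e] using h (e i)
      rw [this, hμ, Measure.pi_pi]
      exact Equiv.prod_comp e (fun i => ρ (s i))
    rw [← hmp.measure_preimage (hA (Fin.last n)).nullMeasurableSet]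
    congr 1
    ext w
    simp only [A, Set.mem_preimage, Set.mem_ofPred_eq, Function.comp]
    have : e (Fin.last n) = j := by simp [e]
    rw [this, Finset.card_filter, Finset.card_filter,
      Equiv.sum_comp e (fun i => if T (w i) < T (w j) then 1 else 0)]
  have hsum : (k : ENNReal) ≤ ∑ j, μ (A j) := by
    calc (k : ENNReal) = ∫⁻ _, (k : ENNReal) ∂μ := by simp
      _ ≤ ∫⁻ w, ∑ j, (A j).indicator 1 w ∂μ := by
        refine lintegral_mono fun w => ?_
        have := pcp_count (fun i => T (w i)) k hk
        rw [Finset.card_filter] at this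
        have h2 : (k : ENNReal) ≤ ((∑ j, if (Finset.univ.filter fun i => T (w i) < T (w j)).card < k then 1 else 0 : ℕ) : ENNReal) := by
          exact_mod_cast this
        refine h2.trans (le_of_eq ?_)
        push_cast
        refine Finset.sum_congr rfl fun j _ => ?_
        simp [Set.indicator_apply, A]
      _ = ∑ j, μ (A j) := by
        rw [lintegral_finsetSum _ fun j _ => measurable_one.indicator (hA j)]
        simp [lintegral_indicator_one, hA]
  simp only [hEq, Finset.sum_const, Finset.card_univ, Fintype.card_fin, nsmul_eq_mul] at hsum
  exact hsum

lemma pcp_measurable_pi {Z ι : Type*} [MeasurableSpace Z] [Fintype ι] {E : ι → Type*}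
    [∀ i, MeasurableSpace (E i)] (κ : ∀ i, Z → Measure (E i))
    [∀ i z, IsProbabilityMeasure (κ i z)]
    (hκ : ∀ i, Measurable (κ i)) : Measurable fun z => Measure.pi fun i => κ i z := by
  refine Measurable.measure_of_isPiSystem_of_isProbabilityMeasure generateFrom_pi.symm isPiSystem_pi ?_
  rintro _ ⟨s, hs, rfl⟩
  simp only [Measure.pi_pi]
  refine Finset.measurable_prod _ fun i _ => ?_
  exact (Measure.measurable_coe (hs i (Set.mem_univ i))).comp (hκ i)

lemma pcp_bind_eq {Z F : Type*} [MeasurableSpace Z] [MeasurableSpace F] (n : ℕ)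
    (ν : Measure Z) [IsProbabilityMeasure ν] (η : Kernel Z F) [IsMarkovKernel η] :
    ((Measure.pi fun _ : Fin n => ν).bind fun zs =>
        Measure.map (fun (yh : Fin n → F) (i : Fin n) => (zs i, yh i))
          (Measure.pi fun i => η (zs i))) = Measure.pi fun _ : Fin n => ν.compProd η := by
  have hm : ∀ zs : Fin n → Z, Measurable (fun (yh : Fin n → F) (i : Fin n) => (zs i, yh i)) := by
    intro zs
    fun_prop
  have hbox : ∀ (s : Fin n → Set (Z × F)), (∀ i, MeasurableSet (s i)) → ∀ zs : Fin n → Z,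
      Measure.map (fun (yh : Fin n → F) (i : Fin n) => (zs i, yh i))
          (Measure.pi fun i => η (zs i)) (Set.univ.pi s) =
        ∏ i, η (zs i) (Prod.mk (zs i) ⁻¹' s i) := by
    intro s hs zs
    rw [Measure.map_apply (hm zs) (MeasurableSet.univ_pi hs), ← Measure.pi_pi]
    congr 1
  have hmeas : ∀ s : Set (Z × F), MeasurableSet s →
      Measurable fun z => η z (Prod.mk z ⁻¹' s) := fun s hs =>
    Kernel.measurable_kernel_prodMk_left hs
  have hM : Measurable fun zs : Fin n → Z =>
      Measure.map (fun (yh : Fin n → F) (i : Fin n) => (zs i, yh i))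
          (Measure.pi fun i => η (zs i)) := by
    have : ∀ zs : Fin n → Z, IsProbabilityMeasure
      (Measure.map (fun (yh : Fin n → F) (i : Fin n) => (zs i, yh i))
          (Measure.pi fun i => η (zs i))) := fun zs =>
      Measure.isProbabilityMeasure_map (hm zs).aemeasurable
    refine Measurable.measure_of_isPiSystem_of_isProbabilityMeasure generateFrom_pi.symm
      isPiSystem_pi ?_
    rintro _ ⟨s, hs, rfl⟩
    have hs' : ∀ i, MeasurableSet (s i) := fun i => hs i (Set.mem_univ i)
    simp only [hbox s hs']
    refine Finset.measurable_prod _ fun i _ => ?_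
    exact (hmeas _ (hs' i)).comp (measurable_pi_apply i)
  refine (Measure.pi_eq fun s hs => ?_).symm
  rw [Measure.bind_apply (MeasurableSet.univ_pi hs) hM.aemeasurable]
  simp only [hbox s hs]
  rw [lintegral_prod_eq_prod_lintegral_of_indepFun Finset.univ
    (fun i (zs : Fin n → Z) => η (zs i) (Prod.mk (zs i) ⁻¹' s i))
    (iIndepFun_pi (X := fun i z => η z (Prod.mk z ⁻¹' s i))
      fun i => (hmeas _ (hs i)).aemeasurable)
    (fun i => (hmeas _ (hs i)).comp (measurable_pi_apply i))]
  refine Finset.prod_congr rfl fun i _ => ?_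
  rw [Measure.compProd_apply (hs i)]
  exact (measurePreserving_eval (fun _ : Fin n => ν) i).lintegral_comp (hmeas _ (hs i))

/-- Calibration of probabilistic conformal prediction (PCP): the pairs
`(x i, y i) ∈ X × ℝ^d`, `i = 1, …, N+1`, are i.i.d. with law `ν`; conditionally
independently given the pairs, each point receives `M` i.i.d. predictions drawn from
the Markov kernel `κ` evaluated at its input. With score
`s i = min_m ‖y i - ŷ i m‖` and `Q` the `⌈(1-α)(N+1)⌉`-th smallest calibration score,
the PCP set `Γ_M(x) = {y' | min_m ‖y' - ŷ m‖ ≤ Q}` covers the test label with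
probability at least `1 - α`. -/
theorem pcp_calibration
    {X : Type*} [MeasurableSpace X] (d : ℕ) (hd : 1 ≤ d)
    (κ : Kernel X (EuclideanSpace ℝ (Fin d))) [IsMarkovKernel κ]
    (N M : ℕ) (hM : 1 ≤ M)
    (ν : Measure (X × EuclideanSpace ℝ (Fin d))) [IsProbabilityMeasure ν]
    (α : ℝ) (hα0 : 0 < α) (hα1 : α < 1) (hαN : 1 / ((N : ℝ) + 1) ≤ α) :
    ENNReal.ofReal (1 - α) ≤
      ((Measure.pi fun _ : Fin (N + 1) => ν).bind fun zs =>
        Measure.map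
          (fun (yh : Fin (N + 1) → Fin M → EuclideanSpace ℝ (Fin d))
            (i : Fin (N + 1)) => (zs i, yh i))
          (Measure.pi fun i => Measure.pi fun _ : Fin M => κ (zs i).1))
      {w : Fin (N + 1) → (X × EuclideanSpace ℝ (Fin d)) × (Fin M → EuclideanSpace ℝ (Fin d)) |
        (w (Fin.last N)).1.2 ∈
          {y' : EuclideanSpace ℝ (Fin d) |
            (⨅ m : Fin M, ‖y' - (w (Fin.last N)).2 m‖) ≤
              kthSmallest
                (List.ofFn fun i : Fin N =>
                  ⨅ m : Fin M, ‖(w i.castSucc).1.2 - (w i.castSucc).2 m‖)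
                ⌈(1 - α) * ((N : ℝ) + 1)⌉₊}} := by
  have hN : (0 : ℝ) < (N : ℝ) + 1 := by positivity
  set k := ⌈(1 - α) * ((N : ℝ) + 1)⌉₊ with hk
  have hk1 : 1 ≤ k := Nat.one_le_ceil_iff.2 (mul_pos (by linarith) hN)
  have hkN : k ≤ N := by
    refine Nat.ceil_le.2 ?_
    rw [div_le_iff₀ hN] at hαN
    linarith
  have hkge : (1 - α) * ((N : ℝ) + 1) ≤ k := Nat.le_ceil _
  let η : Kernel (X × EuclideanSpace ℝ (Fin d)) (Fin M → EuclideanSpace ℝ (Fin d)) :=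
    ⟨fun z => Measure.pi fun _ : Fin M => κ z.1,
      pcp_measurable_pi (Z := X × EuclideanSpace ℝ (Fin d)) (fun _ z => κ z.1) fun _ => κ.measurable.comp measurable_fst⟩
  have : IsMarkovKernel η := ⟨fun z => by
    change IsProbabilityMeasure (Measure.pi fun _ : Fin M => κ z.1)
    infer_instance⟩
  have hb := pcp_bind_eq (N + 1) ν η
  change ((Measure.pi fun _ : Fin (N + 1) => ν).bind fun zs =>
        Measure.map
          (fun (yh : Fin (N + 1) → Fin M → EuclideanSpace ℝ (Fin d))
            (i : Fin (N + 1)) => (zs i, yh i))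
          (Measure.pi fun i => Measure.pi fun _ : Fin M => κ (zs i).1)) = _ at hb
  rw [hb]
  let T : (X × EuclideanSpace ℝ (Fin d)) × (Fin M → EuclideanSpace ℝ (Fin d)) → ℝ :=
    fun w => ⨅ m : Fin M, ‖w.1.2 - w.2 m‖
  have hT : Measurable T := by
    refine Measurable.iInf fun m => ?_
    fun_prop
  have hex := pcp_exch (ν.compProd η) T hT N k (by omega)
  have hle : (Measure.pi fun _ : Fin (N + 1) => ν.compProd η)
      {w | (Finset.univ.filter fun i => T (w i) < T (w (Fin.last N))).card < k} ≤
      (Measure.pi fun _ : Fin (N + 1) => ν.compProd η)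
      {w | T (w (Fin.last N)) ≤ kthSmallest (List.ofFn fun i : Fin N => T (w i.castSucc)) k} := by
    refine measure_mono fun w hw => ?_
    simp only [Set.mem_ofPred_eq] at hw ⊢
    refine pcp_le_kth _ k hk1 (by simpa using hkN) _ ?_
    rw [pcp_countP_ofFn]
    refine lt_of_le_of_lt ?_ hw
    rw [← Finset.card_map Fin.castSuccEmb]
    refine Finset.card_le_card fun j hj => ?_
    simp only [Finset.mem_map, Finset.mem_filter, Finset.mem_univ, true_and] at hj ⊢
    obtain ⟨i, hi, rfl⟩ := hj
    exact hi
  refine le_trans ?_ hle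
  have h0 : ((N + 1 : ℕ) : ENNReal) ≠ 0 := by simp
  have htop : ((N + 1 : ℕ) : ENNReal) ≠ ⊤ := ENNReal.natCast_ne_top _
  refine (ENNReal.mul_le_mul_iff_right h0 htop).1 (le_trans ?_ hex)
  rw [← ENNReal.ofReal_natCast, ← ENNReal.ofReal_natCast, ← ENNReal.ofReal_mul (by positivity)]
  refine ENNReal.ofReal_le_ofReal ?_
  push_cast
  linarith
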